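/- Let A be a commutative ring, let γ, δ, s, t ∈ A, let q(X,Y) = X² + γXY + δY², let R = A[X,Y]/(q(X,Y) − q(s,t)), and let u, v be the images of X, Y in R. Let α be the R-linear endomorphism of R² given by the matrix [[δv + δt + γu, u + s + γt], [−(u − s), v − t]]. Then the R-linear map ρ : R² → R defined by ρ(a, b) = (v − t)·a − (u + s + γt)·b has image equal to the ideal K = (v − t, u + s + γt) of R and kernel equal to the image of α; consequently the cokernel of α is isomorphic as an R-module to the ideal K. -/

import Mathlib

noncomputable section
open MvPolynomial

/-- `q(X,Y) - q(s,t)` in `A[X,Y]`, where `q(X,Y) = X² + γXY + δY²`. -/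
def keyRel (A : Type*) [CommRing A] (γ δ s t : A) : MvPolynomial (Fin 2) A :=
  X 0 ^ 2 + C γ * X 0 * X 1 + C δ * X 1 ^ 2 - C (s ^ 2 + γ * s * t + δ * t ^ 2)

/-- `R = A[X,Y]/(q(X,Y) - q(s,t))`. -/
abbrev KeyRing (A : Type*) [CommRing A] (γ δ s t : A) :=
  MvPolynomial (Fin 2) A ⧸ Ideal.span {keyRel A γ δ s t}

/-- The quotient map `A[X,Y] → R`. -/
def kmk (A : Type*) [CommRing A] (γ δ s t : A) :
    MvPolynomial (Fin 2) A →+* KeyRing A γ δ s t :=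
  Ideal.Quotient.mk (Ideal.span {keyRel A γ δ s t})

/-- The `R`-linear map `R² → R`, `(a, b) ↦ c·a - d·b`. -/
def pairMap {R : Type*} [CommRing R] (c d : R) : (Fin 2 → R) →ₗ[R] R where
  toFun a := c * a 0 - d * a 1
  map_add' a b := by simp [mul_add]; ring
  map_smul' r a := by simp [smul_eq_mul]; ring

/-- The polynomial `X 0 - C t` is a non-zero-divisor in `A[X 0]`. -/
theorem eq_zero_of_X_sub_C_mul_eq_zero {A : Type*} [CommRing A] (t : A)
    {p : MvPolynomial (Fin 1) A} (h : (X 0 - C t) * p = 0) : p = 0 := by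
  have h' := congrArg (finSuccEquiv A 0) h
  rw [map_mul, map_sub, finSuccEquiv_X_zero, finSuccEquiv_apply A 0 (C t), eval₂Hom_C,
    map_zero, RingHom.comp_apply] at h'
  have h0 := (Polynomial.monic_X_sub_C (C t : MvPolynomial (Fin 0) A)).mul_right_eq_zero_iff.1 h'
  exact (finSuccEquiv A 0).injective (h0.trans (map_zero _).symm)

/-- The Koszul relations generate all relations between `Y - t` and `X + e` in `A[X,Y]`. -/
theorem exists_of_X_sub_C_mul_eq_X_add_C_mul {A : Type*} [CommRing A] (t e : A)
    {a b : MvPolynomial (Fin 2) A} (h : (X 1 - C t) * a = (X 0 + C e) * b) :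
    ∃ g, a = (X 0 + C e) * g ∧ b = (X 1 - C t) * g := by
  let φ := finSuccEquiv A 1
  have hC (r : A) : φ (C r) = Polynomial.C (C r) := by
    simp [φ, finSuccEquiv_apply]
  have hX : φ (X 0 + C e) = Polynomial.X - Polynomial.C (C (-e)) := by
    rw [map_add, hC, finSuccEquiv_X_zero, map_neg C, map_neg Polynomial.C, sub_neg_eq_add]
  have hY : φ (X 1 - C t) = Polynomial.C (X 0 - C t) := by
    rw [map_sub, hC, map_sub Polynomial.C, ← finSuccEquiv_X_succ]
    rfl
  have h' := congrArg φ h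
  rw [map_mul, map_mul, hX, hY] at h'
  have hroot : (φ a).IsRoot (C (-e)) := by
    apply eq_zero_of_X_sub_C_mul_eq_zero t
    simpa using congrArg (Polynomial.eval (C (-e))) h'
  obtain ⟨g, hg⟩ := Polynomial.dvd_iff_isRoot.2 hroot
  have hb : φ b = Polynomial.C (X 0 - C t) * g := by
    apply (Polynomial.monic_X_sub_C (C (-e) : MvPolynomial (Fin 1) A)).isRegular.left
    change _ * _ = _ * _
    rw [← h', hg]
    ring
  refine ⟨φ.symm g, φ.injective ?_, φ.injective ?_⟩
  · rw [map_mul, hX, AlgEquiv.apply_symm_apply, hg]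
  · rw [map_mul, hY, AlgEquiv.apply_symm_apply, hb]

theorem range_pairMap {R : Type*} [CommRing R] (c d : R) :
    LinearMap.range (pairMap c d) = Ideal.span {c, d} := by
  ext x
  rw [Ideal.mem_span_pair]
  constructor
  · rintro ⟨a, rfl⟩
    exact ⟨a 0, -a 1, by simp [pairMap]; ring⟩
  · rintro ⟨a, b, rfl⟩
    exact ⟨![a, -b], by simp [pairMap]; ring⟩

theorem keyRel_eq {A : Type*} [CommRing A] (γ δ s t : A) :
    keyRel A γ δ s t = (X 1 - C t) * (C δ * X 1 + C (δ * t) + C γ * X 0)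
      + (X 0 + C s + C (γ * t)) * (X 0 - C s) := by
  simp only [keyRel, map_add, map_mul, map_pow]
  ring

theorem ker_pairMap_eq_range {A : Type*} [CommRing A] (γ δ s t : A) :
    LinearMap.ker (pairMap (kmk A γ δ s t (X 1 - C t))
        (kmk A γ δ s t (X 0 + C s + C (γ * t))))
      = LinearMap.range (!![kmk A γ δ s t (C δ * X 1 + C (δ * t) + C γ * X 0),
          kmk A γ δ s t (X 0 + C s + C (γ * t));
          kmk A γ δ s t (-(X 0 - C s)), kmk A γ δ s t (X 1 - C t)]).mulVecLin := by
  have hrel : kmk A γ δ s t (X 1 - C t) * kmk A γ δ s t (C δ * X 1 + C (δ * t) + C γ * X 0)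
      + kmk A γ δ s t (X 0 + C s + C (γ * t)) * kmk A γ δ s t (X 0 - C s) = 0 := by
    rw [← map_mul, ← map_mul, ← map_add, ← keyRel_eq]
    exact Ideal.Quotient.eq_zero_iff_mem.2 (Ideal.mem_span_singleton_self _)
  ext x
  constructor
  · intro hx
    obtain ⟨a, ha⟩ := Ideal.Quotient.mk_surjective (x 0)
    obtain ⟨b, hb⟩ := Ideal.Quotient.mk_surjective (x 1)
    change kmk A γ δ s t a = x 0 at ha
    change kmk A γ δ s t b = x 1 at hb
    change _ * x 0 - _ * x 1 = 0 at hx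
    rw [← ha, ← hb, ← map_mul, ← map_mul, ← map_sub] at hx
    obtain ⟨g, hg⟩ := Ideal.mem_span_singleton.1 (Ideal.Quotient.eq_zero_iff_mem.1 hx)
    rw [keyRel_eq] at hg
    obtain ⟨h, h0, h1⟩ := exists_of_X_sub_C_mul_eq_X_add_C_mul t (s + γ * t)
      (a := a - (C δ * X 1 + C (δ * t) + C γ * X 0) * g) (b := b + (X 0 - C s) * g) (by
        rw [map_add C, ← add_assoc]
        linear_combination hg)
    rw [map_add C, ← add_assoc] at h0
    refine ⟨![kmk A γ δ s t g, kmk A γ δ s t h], ?_⟩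
    ext i
    fin_cases i
    · change _ = x 0
      rw [← ha, sub_eq_iff_eq_add.1 h0, map_add, map_mul, map_mul]
      simp [Matrix.mulVec, dotProduct, Fin.sum_univ_two]
      ring
    · change _ = x 1
      rw [← hb, eq_sub_of_add_eq h1, map_sub, map_mul, map_mul]
      simp [Matrix.mulVec, dotProduct, Fin.sum_univ_two]
      ring
  · rintro ⟨y, rfl⟩
    change _ * (Matrix.mulVec _ y 0) - _ * (Matrix.mulVec _ y 1) = 0
    simp only [Matrix.mulVec, dotProduct, Fin.sum_univ_two, Matrix.of_apply, Matrix.cons_val_zero,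
      Matrix.cons_val_one, map_neg]
    linear_combination y 0 * hrel

/-- The map `ρ : R² → R`, `ρ(a,b) = (v - t)·a - (u + s + γt)·b`, has image the ideal
`K = (v - t, u + s + γt)` and kernel the image of `α`; hence `coker α ≅ K` as
`R`-modules. -/
theorem stmt10 {A : Type*} [CommRing A] (γ δ s t : A)
    (α : Matrix (Fin 2) (Fin 2) (KeyRing A γ δ s t))
    (hα : α = !![kmk A γ δ s t (C δ * X 1 + C (δ * t) + C γ * X 0),
                 kmk A γ δ s t (X 0 + C s + C (γ * t));
                 kmk A γ δ s t (-(X 0 - C s)), kmk A γ δ s t (X 1 - C t)]) :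
    LinearMap.range (pairMap (kmk A γ δ s t (X 1 - C t))
          (kmk A γ δ s t (X 0 + C s + C (γ * t))))
        = (Ideal.span {kmk A γ δ s t (X 1 - C t), kmk A γ δ s t (X 0 + C s + C (γ * t))} :
            Ideal (KeyRing A γ δ s t)) ∧
    LinearMap.ker (pairMap (kmk A γ δ s t (X 1 - C t))
          (kmk A γ δ s t (X 0 + C s + C (γ * t))))
        = LinearMap.range α.mulVecLin ∧
    Nonempty (((Fin 2 → KeyRing A γ δ s t) ⧸ LinearMap.range α.mulVecLin) ≃ₗ[KeyRing A γ δ s t]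
      (Ideal.span {kmk A γ δ s t (X 1 - C t), kmk A γ δ s t (X 0 + C s + C (γ * t))} :
        Ideal (KeyRing A γ δ s t))) := by
  subst hα
  have hker := ker_pairMap_eq_range γ δ s t
  refine ⟨range_pairMap _ _, hker, ⟨?_⟩⟩
  exact (Submodule.quotEquivOfEq _ _ hker.symm).trans
    ((LinearMap.quotKerEquivRange _).trans (LinearEquiv.ofEq _ _ (range_pairMap _ _)))
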